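/- arXiv:1711.00680 — 3 statements merged into one kernel-verified Lean document; each statement's English description precedes it below -/
import Mathlib

section
/- Let Z ⊆ M ⊊ N ⊆ V. Then for every x_Z ∈ 𝔛_Z: (a) ν_Z^M(x_Z) = ν_Z^N(x_Z) + d̃_Z^{(M)}(x_Z); and (b) d̃_Z^{(M)}(x_Z) = Σ_{A ⊆ Z} (λ_A^M(x_A) − λ_A^N(x_A)). -/
open Finset

variable {V : Type*} [Fintype V] [DecidableEq V]
variable {𝔛 : V → Type*} [∀ v, Fintype (𝔛 v)] [∀ v, DecidableEq (𝔛 v)]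
  [∀ v, Nonempty (𝔛 v)]

/-- The marginal `p_A` of a distribution `p` on the full table, evaluated at the
`A`-coordinates of `x`. -/
noncomputable def margin (p : (∀ v, 𝔛 v) → ℝ) (A : Finset V) (x : ∀ v, 𝔛 v) : ℝ :=
  ∑ y ∈ Finset.univ.filter (fun y : ∀ v, 𝔛 v => ∀ v ∈ A, y v = x v), p y

/-- `ν_L^M(x_L) = (1/|𝔛_{M∖L}|) Σ_{j ∈ 𝔛_M : j_L = x_L} log p_M(j)`, written with sums over
full configurations (for `L ⊆ M` the extra coordinates cancel against the normalization). -/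
noncomputable def nu (p : (∀ v, 𝔛 v) → ℝ) (L M : Finset V) (x : ∀ v, 𝔛 v) : ℝ :=
  (∏ v ∈ Lᶜ, (Fintype.card (𝔛 v) : ℝ))⁻¹ *
    ∑ j ∈ Finset.univ.filter (fun j : ∀ v, 𝔛 v => ∀ v ∈ L, j v = x v),
      Real.log (margin p M j)

/-- The marginal log-linear parameter `λ_L^M(x_L) = Σ_{L' ⊆ L} (−1)^{|L∖L'|} ν_{L'}^M(x_{L'})`. -/
noncomputable def mll (p : (∀ v, 𝔛 v) → ℝ) (L M : Finset V) (x : ∀ v, 𝔛 v) : ℝ :=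
  ∑ L' ∈ L.powerset, (-1 : ℝ) ^ ((L \ L').card) * nu p L' M x

/-- `d^{(M)}(x_M) = log p_M(x_M) − ν_M^N(x_M)`. -/
noncomputable def dd (p : (∀ v, 𝔛 v) → ℝ) (M N : Finset V) (x : ∀ v, 𝔛 v) : ℝ :=
  Real.log (margin p M x) - nu p M N x

/-- `d̃_Z^{(M)}(x_Z) = (1/|𝔛_{M∖Z}|) Σ_{j ∈ 𝔛_M : j_Z = x_Z} d^{(M)}(j)`, written with sums
over full configurations (for `Z ⊆ M` the extra coordinates cancel). -/
noncomputable def dtilde (p : (∀ v, 𝔛 v) → ℝ) (M N Z : Finset V) (x : ∀ v, 𝔛 v) : ℝ :=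
  (∏ v ∈ Zᶜ, (Fintype.card (𝔛 v) : ℝ))⁻¹ *
    ∑ j ∈ Finset.univ.filter (fun j : ∀ v, 𝔛 v => ∀ v ∈ Z, j v = x v), dd p M N j

theorem moebius_aux {W : Type*} [DecidableEq W] (Z : Finset W) : ∀ f : Finset W → ℝ,
    ∑ A ∈ Z.powerset, ∑ L ∈ A.powerset, (-1 : ℝ) ^ ((A \ L).card) * f L = f Z := by
  induction Z using Finset.induction_on with
  | empty => intro f; simp
  | insert a Z ha ih =>
    intro f
    rw [Finset.sum_powerset_insert ha, ih f]
    have h : ∀ A ∈ Z.powerset,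
        ∑ L ∈ (insert a A).powerset, (-1 : ℝ) ^ ((insert a A \ L).card) * f L =
        -(∑ L ∈ A.powerset, (-1 : ℝ) ^ ((A \ L).card) * f L) +
          ∑ L ∈ A.powerset, (-1 : ℝ) ^ ((A \ L).card) * f (insert a L) := by
      intro A hA
      have haA : a ∉ A := fun h => ha (Finset.mem_powerset.1 hA h)
      rw [Finset.sum_powerset_insert haA, ← Finset.sum_neg_distrib]
      congr 1
      · refine Finset.sum_congr rfl fun L hL => ?_
        have haL : a ∉ L := fun h => haA (Finset.mem_powerset.1 hL h)
        rw [Finset.insert_sdiff_of_notMem _ haL, Finset.card_insert_of_notMem (by simp [haA])]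
        ring
      · refine Finset.sum_congr rfl fun L hL => ?_
        have : insert a A \ insert a L = A \ L := by
          ext v
          simp only [Finset.mem_sdiff, Finset.mem_insert]
          grind
        rw [this]
    rw [Finset.sum_congr rfl h, Finset.sum_add_distrib, Finset.sum_neg_distrib, ih f,
      ih (fun L => f (insert a L))]
    ring

theorem card_fiber_aux {V : Type*} [Fintype V] [DecidableEq V]
    {𝔛 : V → Type*} [∀ v, Fintype (𝔛 v)] [∀ v, DecidableEq (𝔛 v)]
    (M : Finset V) (k : ∀ v, 𝔛 v) :
    (((Finset.univ.filter (fun j : ∀ v, 𝔛 v => ∀ v ∈ M, k v = j v)).card : ℕ) : ℝ) =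
      ∏ v ∈ Mᶜ, (Fintype.card (𝔛 v) : ℝ) := by
  have h : Finset.univ.filter (fun j : ∀ v, 𝔛 v => ∀ v ∈ M, k v = j v) =
      Fintype.piFinset (fun v => if v ∈ M then {k v} else Finset.univ) := by
    ext j
    simp only [Finset.mem_filter, Finset.mem_univ, true_and, Fintype.mem_piFinset]
    refine forall_congr' fun v => ?_
    by_cases hv : v ∈ M <;> simp [hv, eq_comm]
  rw [h, Fintype.card_piFinset, Nat.cast_prod, ← Finset.prod_mul_prod_compl M]
  rw [Finset.prod_eq_one (s := M), one_mul]
  · refine Finset.prod_congr rfl fun v hv => ?_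
    rw [if_neg (Finset.mem_compl.1 hv), Finset.card_univ]
  · intro v hv
    simp [hv]

theorem tower_aux {V : Type*} [Fintype V] [DecidableEq V]
    {𝔛 : V → Type*} [∀ v, Fintype (𝔛 v)] [∀ v, DecidableEq (𝔛 v)] [∀ v, Nonempty (𝔛 v)]
    (Z M : Finset V) (hZM : Z ⊆ M) (f : (∀ v, 𝔛 v) → ℝ) (x : ∀ v, 𝔛 v) :
    ∑ j ∈ Finset.univ.filter (fun j : ∀ v, 𝔛 v => ∀ v ∈ Z, j v = x v),
      (∏ v ∈ Mᶜ, (Fintype.card (𝔛 v) : ℝ))⁻¹ *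
        ∑ k ∈ Finset.univ.filter (fun k : ∀ v, 𝔛 v => ∀ v ∈ M, k v = j v), f k =
    ∑ k ∈ Finset.univ.filter (fun k : ∀ v, 𝔛 v => ∀ v ∈ Z, k v = x v), f k := by
  rw [← Finset.mul_sum]
  rw [Finset.sum_comm' (t' := Finset.univ.filter (fun k : ∀ v, 𝔛 v => ∀ v ∈ Z, k v = x v))
    (s' := fun k => Finset.univ.filter (fun j : ∀ v, 𝔛 v => ∀ v ∈ M, k v = j v))]
  · have hne : (∏ v ∈ Mᶜ, (Fintype.card (𝔛 v) : ℝ)) ≠ 0 :=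
      Finset.prod_ne_zero_iff.2 fun v _ => Nat.cast_ne_zero.2 Fintype.card_ne_zero
    simp only [Finset.sum_const, nsmul_eq_mul, card_fiber_aux]
    rw [← Finset.mul_sum, inv_mul_cancel_left₀ hne]
  · intro j k
    simp only [Finset.mem_filter, Finset.mem_univ, true_and]
    constructor
    · rintro ⟨h1, h2⟩
      exact ⟨h2, fun v hv => (h2 v (hZM hv)).trans (h1 v hv)⟩
    · rintro ⟨h2, h1⟩
      exact ⟨fun v hv => (h2 v (hZM hv)).symm.trans (h1 v hv), h2⟩

theorem stmt5 (p : (∀ v, 𝔛 v) → ℝ) (hp : ∀ x, 0 < p x) (hsum : ∑ x, p x = 1)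
    (Z M N : Finset V) (hZM : Z ⊆ M) (hMN : M ⊂ N) :
    ∀ x : ∀ v, 𝔛 v,
      nu p Z M x = nu p Z N x + dtilde p M N Z x ∧
      dtilde p M N Z x = ∑ A ∈ Z.powerset, (mll p A M x - mll p A N x) := by
  intro x
  have ha : nu p Z M x = nu p Z N x + dtilde p M N Z x := by
    have h := tower_aux Z M hZM (fun k => Real.log (margin p N k)) x
    simp only [dtilde, dd, Finset.sum_sub_distrib]
    unfold nu
    rw [h]
    ring
  refine ⟨ha, ?_⟩
  have hM : ∑ A ∈ Z.powerset, mll p A M x = nu p Z M x :=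
    moebius_aux Z (fun L => nu p L M x)
  have hN : ∑ A ∈ Z.powerset, mll p A N x = nu p Z N x :=
    moebius_aux Z (fun L => nu p L N x)
  rw [Finset.sum_sub_distrib, hM, hN, ha]
  ring
end

section
/- Let ∅ ≠ L ⊆ M ⊊ N ⊆ V, and for Z ⊆ M set δ_Z(x_Z) = λ_Z^M(x_Z) − λ_Z^N(x_Z). Then for each x_L ∈ 𝔛_L the following are equivalent: (i) δ_L(x_L) = 0; (ii) d̃_L^{(M)}(x_L) = Σ_{Z ⊊ L} δ_Z(x_Z); (iii) Σ_{Z ⊆ L} (−1)^{|L∖Z|} d̃_Z^{(M)}(x_Z) = 0. -/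
open Finset

variable {V : Type*} [Fintype V] [DecidableEq V]
variable {𝔛 : V → Type*} [∀ v, Fintype (𝔛 v)] [∀ v, DecidableEq (𝔛 v)]
  [∀ v, Nonempty (𝔛 v)]

lemma card_agree (M : Finset V) (k : ∀ v, 𝔛 v) :
    ((Finset.univ.filter (fun j : ∀ v, 𝔛 v => ∀ v ∈ M, k v = j v)).card : ℝ)
      = ∏ v ∈ Mᶜ, (Fintype.card (𝔛 v) : ℝ) := by
  have h : Finset.univ.filter (fun j : ∀ v, 𝔛 v => ∀ v ∈ M, k v = j v)
      = Fintype.piFinset (fun v => if v ∈ M then {k v} else Finset.univ) := by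
    ext j
    simp only [Finset.mem_filter, Finset.mem_univ, true_and, Fintype.mem_piFinset]
    refine forall_congr' fun v => ?_
    by_cases hv : v ∈ M <;> simp [hv, eq_comm]
  rw [h, Fintype.card_piFinset, ← Finset.prod_mul_prod_compl M, Finset.prod_eq_one, one_mul]
  · push_cast
    refine Finset.prod_congr rfl fun v hv => ?_
    simp [Finset.mem_compl.1 hv]
  · intro v hv
    simp [hv]

lemma tower_sum (f : (∀ v, 𝔛 v) → ℝ) (Z M : Finset V) (hZM : Z ⊆ M) (x : ∀ v, 𝔛 v) :
    ∑ j ∈ Finset.univ.filter (fun j : ∀ v, 𝔛 v => ∀ v ∈ Z, j v = x v),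
      ((∏ v ∈ Mᶜ, (Fintype.card (𝔛 v) : ℝ))⁻¹ *
        ∑ k ∈ Finset.univ.filter (fun k : ∀ v, 𝔛 v => ∀ v ∈ M, k v = j v), f k)
    = ∑ j ∈ Finset.univ.filter (fun j : ∀ v, 𝔛 v => ∀ v ∈ Z, j v = x v), f j := by
  have hc : (∏ v ∈ Mᶜ, (Fintype.card (𝔛 v) : ℝ)) ≠ 0 :=
    Finset.prod_ne_zero_iff.2 fun v _ => by exact_mod_cast Fintype.card_ne_zero
  rw [← Finset.mul_sum, inv_mul_eq_iff_eq_mul₀ hc]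
  rw [Finset.sum_comm' (t' := Finset.univ.filter (fun j : ∀ v, 𝔛 v => ∀ v ∈ Z, j v = x v))
    (s' := fun k => Finset.univ.filter (fun j : ∀ v, 𝔛 v => ∀ v ∈ M, k v = j v))]
  · simp only [Finset.sum_const, nsmul_eq_mul, card_agree, Finset.mul_sum]
  · intro j k
    simp only [Finset.mem_filter, Finset.mem_univ, true_and]
    constructor
    · rintro ⟨h1, h2⟩
      exact ⟨h2, fun v hv => (h2 v (hZM hv)).trans (h1 v hv)⟩
    · rintro ⟨h2, h1⟩
      exact ⟨fun v hv => (h2 v (hZM hv)).symm.trans (h1 v hv), h2⟩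

lemma dtilde_eq (p : (∀ v, 𝔛 v) → ℝ) (Z M N : Finset V) (hZM : Z ⊆ M) (x : ∀ v, 𝔛 v) :
    dtilde p M N Z x = nu p Z M x - nu p Z N x := by
  have h := tower_sum (fun k => Real.log (margin p N k)) Z M hZM x
  unfold dtilde dd
  rw [Finset.sum_sub_distrib, mul_sub]
  simp only [nu]
  rw [h]

lemma mobius (g : Finset V → ℝ) (L : Finset V) :
    ∑ Z ∈ L.powerset, ∑ Y ∈ Z.powerset, (-1 : ℝ) ^ ((Z \ Y).card) * g Y = g L := by
  induction L using Finset.induction_on generalizing g with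
  | empty => simp
  | insert a s ha ih =>
    rw [Finset.sum_powerset_insert ha, ih g]
    have key : ∀ Z ∈ s.powerset,
        ∑ Y ∈ (insert a Z).powerset, (-1 : ℝ) ^ ((insert a Z \ Y).card) * g Y
        = - (∑ Y ∈ Z.powerset, (-1 : ℝ) ^ ((Z \ Y).card) * g Y)
          + ∑ Y ∈ Z.powerset, (-1 : ℝ) ^ ((Z \ Y).card) * g (insert a Y) := by
      intro Z hZ
      have haZ : a ∉ Z := fun h => ha (Finset.mem_powerset.1 hZ h)
      rw [Finset.sum_powerset_insert haZ, ← Finset.sum_neg_distrib]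
      congr 1
      · refine Finset.sum_congr rfl fun Y hY => ?_
        have haY : a ∉ Y := fun h => haZ (Finset.mem_powerset.1 hY h)
        rw [Finset.insert_sdiff_of_notMem _ haY, Finset.card_insert_of_notMem
          (fun h => haZ (Finset.mem_sdiff.1 h).1), pow_succ]
        ring
      · refine Finset.sum_congr rfl fun Y hY => ?_
        rw [Finset.insert_sdiff_insert, Finset.sdiff_insert_of_notMem haZ]
    rw [Finset.sum_congr rfl key, Finset.sum_add_distrib, Finset.sum_neg_distrib, ih g,
      ih (fun Y => g (insert a Y))]
    ring

lemma sum_mll (p : (∀ v, 𝔛 v) → ℝ) (L M : Finset V) (x : ∀ v, 𝔛 v) :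
    ∑ Z ∈ L.powerset, mll p Z M x = nu p L M x :=
  mobius (fun Y => nu p Y M x) L

theorem stmt6 (p : (∀ v, 𝔛 v) → ℝ) (hp : ∀ x, 0 < p x) (hsum : ∑ x, p x = 1)
    (L M N : Finset V) (hL : L.Nonempty) (hLM : L ⊆ M) (hMN : M ⊂ N)
    (x : ∀ v, 𝔛 v) :
    ((mll p L M x - mll p L N x = 0) ↔
      dtilde p M N L x =
        ∑ Z ∈ L.powerset.filter (fun Z => Z ≠ L), (mll p Z M x - mll p Z N x)) ∧
    ((mll p L M x - mll p L N x = 0) ↔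
      ∑ Z ∈ L.powerset, (-1 : ℝ) ^ ((L \ Z).card) * dtilde p M N Z x = 0) := by
  have h1 : ∑ Z ∈ L.powerset, (mll p Z M x - mll p Z N x) = dtilde p M N L x := by
    rw [Finset.sum_sub_distrib, sum_mll, sum_mll, dtilde_eq p L M N hLM x]
  have h2 : ∑ Z ∈ L.powerset.filter (fun Z => Z ≠ L), (mll p Z M x - mll p Z N x)
      + (mll p L M x - mll p L N x) = dtilde p M N L x := by
    rw [← h1, Finset.filter_ne', Finset.sum_erase_add _ _ (Finset.mem_powerset_self L)]
  have h3 : ∑ Z ∈ L.powerset, (-1 : ℝ) ^ ((L \ Z).card) * dtilde p M N Z x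
      = mll p L M x - mll p L N x := by
    unfold mll
    rw [← Finset.sum_sub_distrib]
    refine Finset.sum_congr rfl fun Z hZ => ?_
    rw [dtilde_eq p Z M N ((Finset.mem_powerset.1 hZ).trans hLM) x, mul_sub]
  refine ⟨⟨fun h => by linarith, fun h => by linarith⟩, by rw [h3]⟩
end

section
/- Let p, q, r be three distinct elements of V. Then the 3-dimensional table 𝔛_{\{p,q,r\}} is strictly collapsible over {p} into 𝔛_{\{q,r\}} with respect to λ_{\{q\}}^{\{p,q,r\}} and λ_{\{q,r\}}^{\{p,q,r\}}, and strictly collapsible over {q} into 𝔛_{\{p,r\}} with respect to λ_{\{p\}}^{\{p,q,r\}} and λ_{\{p,r\}}^{\{p,q,r\}}, if and only if X_p ⟂ X_q | X_r. -/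
open Finset

variable {V : Type*} [Fintype V] [DecidableEq V]
variable {𝔛 : V → Type*} [∀ v, Fintype (𝔛 v)] [∀ v, DecidableEq (𝔛 v)]
  [∀ v, Nonempty (𝔛 v)]

/-- `X_A ⟂ X_B | X_C`: `p_{A∪B∪C}·p_C = p_{A∪C}·p_{B∪C}` pointwise. -/
def CondIndep (p : (∀ v, 𝔛 v) → ℝ) (A B C : Finset V) : Prop :=
  ∀ x : ∀ v, 𝔛 v,
    margin p (A ∪ B ∪ C) x * margin p C x = margin p (A ∪ C) x * margin p (B ∪ C) x

/-- `𝔛_N` is strictly collapsible over `N ∖ M'` into `𝔛_{M'}` with respect to `λ_L^N`: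
`λ_L^{M'} = λ_L^N` and `λ_Z^N = 0` for every `Z ⊆ N` with `L ⊊ Z` meeting `N ∖ M'`. -/
def StrictlyCollapsible (p : (∀ v, 𝔛 v) → ℝ) (N M' L : Finset V) : Prop :=
  (∀ x : ∀ v, 𝔛 v, mll p L M' x = mll p L N x) ∧
  (∀ Z ⊆ N, L ⊂ Z → (Z ∩ (N \ M')).Nonempty → ∀ x : ∀ v, 𝔛 v, mll p Z N x = 0)


/-- Sum of `G` over configurations agreeing with `x` on `A`. -/
noncomputable def agSum (G : (∀ v, 𝔛 v) → ℝ) (A : Finset V) (x : ∀ v, 𝔛 v) : ℝ :=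
  ∑ y ∈ Finset.univ.filter (fun y : ∀ v, 𝔛 v => ∀ v ∈ A, y v = x v), G y

/-- Average of `G` over configurations agreeing with `x` on `A`. -/
noncomputable def agAv (G : (∀ v, 𝔛 v) → ℝ) (A : Finset V) (x : ∀ v, 𝔛 v) : ℝ :=
  (∏ v ∈ Aᶜ, (Fintype.card (𝔛 v) : ℝ))⁻¹ * agSum G A x

/-- Interaction of `G`. -/
noncomputable def agInt (G : (∀ v, 𝔛 v) → ℝ) (L : Finset V) (x : ∀ v, 𝔛 v) : ℝ :=
  ∑ L' ∈ L.powerset, (-1 : ℝ) ^ ((L \ L').card) * agAv G L' x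

lemma agSum_congr (G : (∀ v, 𝔛 v) → ℝ) (A : Finset V) (x y : ∀ v, 𝔛 v)
    (h : ∀ v ∈ A, x v = y v) : agSum G A x = agSum G A y := by
  unfold agSum
  congr 1
  ext z
  simp only [Finset.mem_filter, Finset.mem_univ, true_and]
  exact forall₂_congr fun v hv => by rw [h v hv]

lemma agSum_split (G : (∀ v, 𝔛 v) → ℝ) (A : Finset V) (x : ∀ v, 𝔛 v) (v : V) (hv : v ∉ A) :
    agSum G A x = ∑ c : 𝔛 v, agSum G (insert v A) (Function.update x v c) := by
  unfold agSum
  rw [← Finset.sum_fiberwise _ (fun y : ∀ v, 𝔛 v => y v)]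
  refine Finset.sum_congr rfl fun c _ => ?_
  congr 1
  ext z
  simp only [Finset.mem_filter, Finset.mem_univ, true_and, Finset.mem_insert, forall_eq_or_imp,
    Function.update_self]
  rw [and_comm]
  refine and_congr_right fun _ => forall₂_congr fun w hw => ?_
  rw [Function.update_of_ne (show w ≠ v by rintro rfl; exact hv hw)]

lemma agSum_indep (G : (∀ v, 𝔛 v) → ℝ) (A : Finset V) (x : ∀ v, 𝔛 v) (v : V) (hv : v ∉ A)
    (hG : ∀ y c, G (Function.update y v c) = G y) (c : 𝔛 v) :
    agSum G (insert v A) (Function.update x v c) = agSum G (insert v A) x := by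
  unfold agSum
  refine Finset.sum_bij' (fun y _ => Function.update y v (x v))
    (fun y _ => Function.update y v c) ?_ ?_ ?_ ?_ ?_
  · intro y hy
    simp only [Finset.mem_filter, Finset.mem_univ, true_and, Finset.mem_insert, forall_eq_or_imp,
      Function.update_self] at hy ⊢
    intro w hw
    have hne : w ≠ v := fun h => hv (h ▸ hw)
    have := hy.2 w hw
    simpa [Function.update_of_ne hne] using this
  · intro y hy
    simp only [Finset.mem_filter, Finset.mem_univ, true_and, Finset.mem_insert, forall_eq_or_imp,
      Function.update_self] at hy ⊢
    intro w hw
    have hne : w ≠ v := fun h => hv (h ▸ hw)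
    have := hy.2 w hw
    simpa [Function.update_of_ne hne] using this
  · intro y hy
    simp only [Finset.mem_filter, Finset.mem_univ, true_and, Finset.mem_insert, forall_eq_or_imp,
      Function.update_self] at hy
    simp [← hy.1]
  · intro y hy
    simp only [Finset.mem_filter, Finset.mem_univ, true_and, Finset.mem_insert, forall_eq_or_imp]
      at hy
    simp [← hy.1]
  · intro y hy
    rw [hG]

lemma agAv_indep (G : (∀ v, 𝔛 v) → ℝ) (A : Finset V) (x : ∀ v, 𝔛 v) (v : V) (hv : v ∉ A)
    (hG : ∀ y c, G (Function.update y v c) = G y) :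
    agAv G (insert v A) x = agAv G A x := by
  unfold agAv
  rw [agSum_split G A x v hv, Finset.sum_congr rfl fun c _ => agSum_indep G A x v hv hG c]
  have h1 : Aᶜ = insert v (insert v A)ᶜ := by
    ext w
    by_cases h : w = v
    · subst h; simp [hv]
    · simp [h]
  rw [h1, Finset.prod_insert (by simp)]
  have : (Fintype.card (𝔛 v) : ℝ) ≠ 0 := by exact_mod_cast Fintype.card_ne_zero
  simp only [Finset.sum_const, Finset.card_univ, nsmul_eq_mul, mul_inv]
  field_simp

lemma agInt_indep (G : (∀ v, 𝔛 v) → ℝ) (L : Finset V) (x : ∀ v, 𝔛 v) (v : V) (hv : v ∈ L)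
    (hG : ∀ y c, G (Function.update y v c) = G y) : agInt G L x = 0 := by
  unfold agInt
  obtain ⟨L0, h0, rfl⟩ : ∃ L0 : Finset V, v ∉ L0 ∧ insert v L0 = L :=
    ⟨L.erase v, by simp, Finset.insert_erase hv⟩
  rw [Finset.sum_powerset_insert h0, ← Finset.sum_add_distrib]
  refine Finset.sum_eq_zero fun t ht => ?_
  have hvt : v ∉ t := fun h => h0 (Finset.mem_powerset.1 ht h)
  rw [agAv_indep G t x v hvt hG, Finset.insert_sdiff_of_notMem _ hvt,
    Finset.card_insert_of_notMem (by simp [h0]), Finset.insert_sdiff_insert,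
    Finset.sdiff_insert_of_notMem h0]
  ring

lemma agAv_self (G : (∀ v, 𝔛 v) → ℝ) (A : Finset V) (x : ∀ v, 𝔛 v)
    (hG : ∀ y, (∀ v ∈ A, y v = x v) → G y = G x) : agAv G A x = G x := by
  unfold agAv agSum
  rw [Finset.sum_congr rfl (g := fun _ => G x) (fun y hy => hG y (by simpa using hy))]
  have h : Finset.univ.filter (fun y : ∀ v, 𝔛 v => ∀ v ∈ A, y v = x v)
      = Fintype.piFinset (fun v => if v ∈ A then {x v} else Finset.univ) := by
    ext y
    simp only [Finset.mem_filter, Finset.mem_univ, true_and, Fintype.mem_piFinset]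
    refine forall_congr' fun v => ?_
    by_cases hv : v ∈ A <;> simp [hv]
  have hc : ((Fintype.piFinset (fun v => if v ∈ A then {x v} else Finset.univ)).card : ℝ)
      = ∏ v ∈ Aᶜ, (Fintype.card (𝔛 v) : ℝ) := by
    rw [Fintype.card_piFinset, ← Finset.prod_mul_prod_compl A, Finset.prod_eq_one, one_mul,
      Nat.cast_prod]
    · refine Finset.prod_congr rfl fun v hv => ?_
      simp [Finset.mem_compl.1 hv]
    · intro v hv
      simp [hv]
  rw [Finset.sum_const, nsmul_eq_mul, h, hc, inv_mul_cancel_left₀]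
  refine Finset.prod_ne_zero_iff.2 fun v _ => ?_
  exact_mod_cast Fintype.card_ne_zero

lemma agInt_lin (F G H : (∀ v, 𝔛 v) → ℝ) (L : Finset V) (x : ∀ v, 𝔛 v) :
    agInt (fun y => F y + G y - H y) L x = agInt F L x + agInt G L x - agInt H L x := by
  unfold agInt agAv agSum
  rw [← Finset.sum_add_distrib, ← Finset.sum_sub_distrib]
  refine Finset.sum_congr rfl fun t _ => ?_
  rw [Finset.sum_sub_distrib, Finset.sum_add_distrib]
  ring

lemma mll_eq (p : (∀ v, 𝔛 v) → ℝ) (L M : Finset V) (x : ∀ v, 𝔛 v) :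
    mll p L M x = agInt (fun y => Real.log (margin p M y)) L x := rfl

lemma margin_eq (p : (∀ v, 𝔛 v) → ℝ) (M : Finset V) (x : ∀ v, 𝔛 v) :
    margin p M x = agSum p M x := rfl

lemma margin_pos' (p : (∀ v, 𝔛 v) → ℝ) (hp : ∀ x, 0 < p x) (M : Finset V) (x : ∀ v, 𝔛 v) :
    0 < margin p M x :=
  Finset.sum_pos (fun y _ => hp y) ⟨x, by simp⟩

lemma logmargin_update (p : (∀ v, 𝔛 v) → ℝ) (M : Finset V) (v : V) (hv : v ∉ M)
    (y : ∀ v, 𝔛 v) (c : 𝔛 v) :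
    Real.log (margin p M (Function.update y v c)) = Real.log (margin p M y) := by
  rw [margin_eq, margin_eq, agSum_congr]
  intro w hw
  rw [Function.update_of_ne (show w ≠ v by rintro rfl; exact hv hw)]

lemma ci_log (p : (∀ v, 𝔛 v) → ℝ) (hp : ∀ x, 0 < p x) (i j k : V)
    (h : CondIndep p {i} {j} {k}) (N : Finset V) (hN : N = {i, j, k}) :
    (fun y => Real.log (margin p N y)) = fun y => Real.log (margin p {i, k} y)
      + Real.log (margin p {j, k} y) - Real.log (margin p {k} y) := by
  funext y
  have h1 := h y
  have e1 : ({i} ∪ {j} ∪ {k} : Finset V) = N := by subst hN; ext; simp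
  have e2 : ({i} ∪ {k} : Finset V) = {i, k} := rfl
  have e3 : ({j} ∪ {k} : Finset V) = {j, k} := rfl
  rw [e1, e2, e3] at h1
  have hh := congrArg Real.log h1
  rw [Real.log_mul (margin_pos' p hp _ _).ne' (margin_pos' p hp _ _).ne',
    Real.log_mul (margin_pos' p hp _ _).ne' (margin_pos' p hp _ _).ne'] at hh
  linarith

lemma ci_collapse (p : (∀ v, 𝔛 v) → ℝ) (hp : ∀ x, 0 < p x) (i j k : V)
    (hij : i ≠ j) (hik : i ≠ k) (hjk : j ≠ k)
    (h : CondIndep p {i} {j} {k}) (N : Finset V) (hN : N = {i, j, k}) (L : Finset V)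
    (hL : j ∈ L) : StrictlyCollapsible p N {j, k} L := by
  refine ⟨fun x => ?_, fun Z _ hLZ hne x => ?_⟩
  · rw [mll_eq, mll_eq, ci_log p hp i j k h N hN, agInt_lin,
      agInt_indep (fun y => Real.log (margin p {i, k} y)) L x j hL
        (logmargin_update p _ j (by simp [hij.symm, hjk])),
      agInt_indep (fun y => Real.log (margin p {k} y)) L x j hL
        (logmargin_update p _ j (by simp [hjk]))]
    ring
  · have hjZ : j ∈ Z := hLZ.1 hL
    have hiZ : i ∈ Z := by
      obtain ⟨w, hw⟩ := hne
      subst hN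
      simp only [Finset.mem_inter, Finset.mem_sdiff, Finset.mem_insert, Finset.mem_singleton] at hw
      obtain ⟨h1, h2, h3⟩ := hw
      have : w = i := by tauto
      exact this ▸ h1
    rw [mll_eq, ci_log p hp i j k h N hN, agInt_lin,
      agInt_indep (fun y => Real.log (margin p {i, k} y)) Z x j hjZ
        (logmargin_update p _ j (by simp [hij.symm, hjk])),
      agInt_indep (fun y => Real.log (margin p {k} y)) Z x j hjZ
        (logmargin_update p _ j (by simp [hjk])),
      agInt_indep (fun y => Real.log (margin p {j, k} y)) Z x i hiZ
        (logmargin_update p _ i (by simp [hij, hik]))]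
    ring

lemma agAv_congr (G : (∀ v, 𝔛 v) → ℝ) (A : Finset V) (x y : ∀ v, 𝔛 v)
    (h : ∀ v ∈ A, x v = y v) : agAv G A x = agAv G A y := by
  unfold agAv
  rw [agSum_congr G A x y h]

lemma int_decomp (G : (∀ v, 𝔛 v) → ℝ) (i j k : V) (hij : i ≠ j) (hik : i ≠ k) (hjk : j ≠ k)
    (x : ∀ v, 𝔛 v) (h2 : agInt G {i, j} x = 0) (h3 : agInt G {i, j, k} x = 0) :
    agAv G {i, j, k} x = agAv G {i, k} x + (agAv G {j, k} x - agAv G {k} x) := by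
  have e3 : agInt G {i, j, k} x = agAv G {i, j, k} x - agAv G {i, j} x - agAv G {i, k} x
      - agAv G {j, k} x + agAv G {i} x + agAv G {j} x + agAv G {k} x - agAv G ∅ x := by
    unfold agInt
    rw [Finset.sum_powerset_insert (by simp [hij, hik]),
      Finset.sum_powerset_insert (by simp [hjk]),
      Finset.sum_powerset_insert (by simp [hjk])]
    have p1 : ({k} : Finset V).powerset = {∅, {k}} := by
      ext t; simp [Finset.subset_singleton_iff]
    have s1 : ({j, k} : Finset V) \ {j} = {k} := by ext w; simp; grind
    have s2 : ({k} : Finset V) \ {i} = {k} := by ext w; simp; grind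
    have s3 : ({k} : Finset V) \ {i, k} = ∅ := by ext w; simp; grind
    have s4 : ({j, k} : Finset V) \ {i, j} = {k} := by ext w; simp; grind
    have s5 : ({j, k} : Finset V) \ {i, j, k} = ∅ := by ext w; simp; grind
    rw [p1]
    simp [Finset.card_insert_of_notMem, Finset.insert_sdiff_of_notMem, s1, s2, s3, s4, s5,
      hij, hik, hjk, hij.symm, hik.symm, hjk.symm]
    ring
  have e2 : agInt G {i, j} x = agAv G {i, j} x - agAv G {i} x
      - agAv G {j} x + agAv G ∅ x := by
    unfold agInt
    rw [Finset.sum_powerset_insert (by simp [hij])]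
    have p1 : ({j} : Finset V).powerset = {∅, {j}} := by
      ext t; simp [Finset.subset_singleton_iff]
    have s1 : ({j} : Finset V) \ {i} = {j} := by ext w; simp; grind
    have s2 : ({j} : Finset V) \ {i, j} = ∅ := by ext w; simp; grind
    rw [p1]
    simp [s1, s2, Finset.card_insert_of_notMem, Finset.insert_sdiff_of_notMem,
      hij, hij.symm]
    ring
  linarith

lemma ci_of_factor (p : (∀ v, 𝔛 v) → ℝ) (i j k : V)
    (hij : i ≠ j) (hik : i ≠ k) (hjk : j ≠ k) (a b : (∀ v, 𝔛 v) → ℝ)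
    (ha : ∀ y c, a (Function.update y j c) = a y)
    (hb : ∀ y c, b (Function.update y i c) = b y)
    (hab : ∀ x, margin p {i, j, k} x = a x * b x) : CondIndep p {i} {j} {k} := by
  intro x
  have e1 : ({i} ∪ {j} ∪ {k} : Finset V) = {i, j, k} := by ext; simp
  have e2 : ({i} ∪ {k} : Finset V) = {i, k} := rfl
  have e3 : ({j} ∪ {k} : Finset V) = {j, k} := rfl
  rw [e1, e2, e3]
  have mik : ∀ x, margin p {i, k} x = a x * ∑ c : 𝔛 j, b (Function.update x j c) := by
    intro x
    have e4 : insert j ({i, k} : Finset V) = {i, j, k} := Finset.insert_comm _ _ _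
    rw [margin_eq, agSum_split p _ x j (by simp [hij.symm, hjk]), e4, Finset.mul_sum]
    refine Finset.sum_congr rfl fun c _ => ?_
    rw [← margin_eq, hab, ha]
  have mjk : margin p {j, k} x = (∑ c : 𝔛 i, a (Function.update x i c)) * b x := by
    rw [margin_eq, agSum_split p _ x i (by simp [hij, hik]), Finset.sum_mul]
    refine Finset.sum_congr rfl fun c _ => ?_
    rw [← margin_eq, hab, hb]
  have mk : margin p {k} x = (∑ c : 𝔛 i, a (Function.update x i c)) *
      ∑ c : 𝔛 j, b (Function.update x j c) := by
    rw [margin_eq, agSum_split p _ x i (by simp [hik]), Finset.sum_mul]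
    refine Finset.sum_congr rfl fun c _ => ?_
    rw [← margin_eq, mik]
    congr 1
    refine Finset.sum_congr rfl fun d _ => ?_
    rw [Function.update_comm hij, hb]
  rw [hab, mik, mjk, mk]
  ring

theorem stmt12 (p : (∀ v, 𝔛 v) → ℝ) (hp : ∀ x, 0 < p x) (hsum : ∑ x, p x = 1)
    (i j k : V) (hij : i ≠ j) (hik : i ≠ k) (hjk : j ≠ k) :
    (StrictlyCollapsible p {i, j, k} {j, k} {j} ∧
     StrictlyCollapsible p {i, j, k} {j, k} {j, k} ∧
     StrictlyCollapsible p {i, j, k} {i, k} {i} ∧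
     StrictlyCollapsible p {i, j, k} {i, k} {i, k}) ↔
    CondIndep p {i} {j} {k} := by
  constructor
  · rintro ⟨⟨-, h⟩, -⟩
    have h2 : ∀ x, mll p {i, j} {i, j, k} x = 0 := by
      apply h
      · intro w; simp; tauto
      · refine ⟨by simp, fun hh => hij ?_⟩
        simpa using hh (Finset.mem_insert_self i _)
      · exact ⟨i, by simp [hij, hik]⟩
    have h3 : ∀ x, mll p {i, j, k} {i, j, k} x = 0 := by
      apply h
      · rfl
      · refine ⟨by simp, fun hh => hij ?_⟩
        simpa using hh (Finset.mem_insert_self i _)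
      · exact ⟨i, by simp [hij, hik]⟩
    set G : (∀ v, 𝔛 v) → ℝ := fun y => Real.log (margin p {i, j, k} y) with hG
    refine ci_of_factor p i j k hij hik hjk (fun x => Real.exp (agAv G {i, k} x))
      (fun x => Real.exp (agAv G {j, k} x - agAv G {k} x)) ?_ ?_ ?_
    · intro y c
      beta_reduce
      rw [agAv_congr G {i, k} _ y]
      intro w hw
      refine Function.update_of_ne ?_ _ _
      rintro rfl
      simp [hij.symm, hjk] at hw
    · intro y c
      beta_reduce
      rw [agAv_congr G {j, k} _ y, agAv_congr G {k} _ y]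
      · intro w hw
        refine Function.update_of_ne ?_ _ _
        rintro rfl
        simp [hik] at hw
      · intro w hw
        refine Function.update_of_ne ?_ _ _
        rintro rfl
        simp [hij, hik] at hw
    · intro x
      rw [← Real.exp_add, ← int_decomp G i j k hij hik hjk x (h2 x) (h3 x), agAv_self,
        hG, Real.exp_log (margin_pos' p hp _ _)]
      intro y hy
      rw [hG]
      simp only [margin_eq]
      rw [agSum_congr p _ y x hy]
  · intro h
    have h' : CondIndep p {j} {i} {k} := by
      intro x
      have := h x
      rw [Finset.union_comm {j} {i}, this, mul_comm]
    exact ⟨ci_collapse p hp i j k hij hik hjk h _ rfl _ (by simp),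
      ci_collapse p hp i j k hij hik hjk h _ rfl _ (by simp),
      ci_collapse p hp j i k hij.symm hjk hik h' _ (Finset.insert_comm _ _ _) _ (by simp),
      ci_collapse p hp j i k hij.symm hjk hik h' _ (Finset.insert_comm _ _ _) _ (by simp)⟩
end
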